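/- arXiv:2004.07498 — 4 statements merged into one kernel-verified Lean document; each statement's English description precedes it below -/
import Mathlib

section
/- Let T be a finite set of real numbers (the attribute values of the tuples), and for a set I ⊆ ℝ let sel(I) denote the number of elements of T lying in I. Let c_r ≥ 0 and c_e ≥ 0 be real constants (the per-tuple read cost and per-tuple policy-evaluation cost). Let [v1x, v2x] and [v1y, v2y] be closed intervals with v1x ≤ v2x and v1y ≤ v2y. If [v1x, v2x] ∩ [v1y, v2y] = ∅, then merging the two guards is never beneficial: sel([min(v1x,v1y), max(v2x,v2y)]) · (c_r + 2·c_e) ≥ sel([v1x, v2x]) · (c_r + c_e) + sel([v1y, v2y]) · (c_r + c_e). -/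
/-- Theorem 1 of the paper: merging two guards whose closed ranges do not
intersect is never beneficial. `T` is the finite set of attribute values and
the selectivity of an interval is the number of elements of `T` in it. -/
theorem merge_disjoint_guards_not_beneficial
    (T : Finset ℝ) (c_r c_e : ℝ) (hcr : 0 ≤ c_r) (hce : 0 ≤ c_e)
    (v1x v2x v1y v2y : ℝ) (hx : v1x ≤ v2x) (hy : v1y ≤ v2y)
    (hdisj : Set.Icc v1x v2x ∩ Set.Icc v1y v2y = ∅) :
    ((T.filter (fun t => min v1x v1y ≤ t ∧ t ≤ max v2x v2y)).card : ℝ) *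
        (c_r + 2 * c_e) ≥
      ((T.filter (fun t => v1x ≤ t ∧ t ≤ v2x)).card : ℝ) * (c_r + c_e) +
      ((T.filter (fun t => v1y ≤ t ∧ t ≤ v2y)).card : ℝ) * (c_r + c_e) := by
  have hd : Disjoint (T.filter (fun t => v1x ≤ t ∧ t ≤ v2x))
      (T.filter (fun t => v1y ≤ t ∧ t ≤ v2y)) := by
    rw [Finset.disjoint_left]
    intro t h1 h2
    have h : t ∈ Set.Icc v1x v2x ∩ Set.Icc v1y v2y :=
      ⟨(Finset.mem_filter.mp h1).2, (Finset.mem_filter.mp h2).2⟩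
    rw [hdisj] at h
    exact h
  have hsub : (T.filter (fun t => v1x ≤ t ∧ t ≤ v2x)) ∪
      (T.filter (fun t => v1y ≤ t ∧ t ≤ v2y)) ⊆
      T.filter (fun t => min v1x v1y ≤ t ∧ t ≤ max v2x v2y) := by
    intro t ht
    simp only [Finset.mem_union, Finset.mem_filter, min_le_iff, le_max_iff] at ht ⊢
    tauto
  have hc := Finset.card_le_card hsub
  rw [Finset.card_union_of_disjoint hd] at hc
  have hc' : ((T.filter (fun t => v1x ≤ t ∧ t ≤ v2x)).card : ℝ) +
      ((T.filter (fun t => v1y ≤ t ∧ t ≤ v2y)).card : ℝ) ≤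
      ((T.filter (fun t => min v1x v1y ≤ t ∧ t ≤ max v2x v2y)).card : ℝ) := by
    exact_mod_cast hc
  rw [ge_iff_le, ← add_mul]
  exact mul_le_mul hc' (by linarith) (by linarith) (by positivity)
end

section
/- Let A and B be finite sets (the sets of tuples satisfying two candidate guards), with A ∪ B nonempty, and let c_r > 0 and c_e > 0 be real constants. Then merging the two guards is beneficial, i.e. |A ∪ B| · (c_r + 2·c_e) < |A| · (c_r + c_e) + |B| · (c_r + c_e), if and only if |A ∩ B| / |A ∪ B| > c_e / (c_r + c_e). -/
/-- Equation 9 of the paper: merging two single-policy guards with tuple sets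
`A` and `B` is beneficial iff the overlap ratio `|A ∩ B| / |A ∪ B|` exceeds
`c_e / (c_r + c_e)`. -/
theorem merge_beneficial_iff_overlap_ratio
    {α : Type*} [DecidableEq α] (A B : Finset α) (hAB : (A ∪ B).Nonempty)
    (c_r c_e : ℝ) (hcr : 0 < c_r) (hce : 0 < c_e) :
    (((A ∪ B).card : ℝ) * (c_r + 2 * c_e) <
        (A.card : ℝ) * (c_r + c_e) + (B.card : ℝ) * (c_r + c_e)) ↔
      ((A ∩ B).card : ℝ) / ((A ∪ B).card : ℝ) > c_e / (c_r + c_e) := by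
  have hU : (0 : ℝ) < ((A ∪ B).card : ℝ) := by
    exact_mod_cast hAB.card_pos
  have hc : 0 < c_r + c_e := add_pos hcr hce
  have h : ((A ∪ B).card : ℝ) + ((A ∩ B).card : ℝ) = (A.card : ℝ) + (B.card : ℝ) := by
    exact_mod_cast Finset.card_union_add_card_inter A B
  rw [gt_iff_lt, div_lt_div_iff₀ hc hU, ← add_mul, ← h]
  constructor <;> intro h' <;> linarith
end

section
/- Let A, B, C be finite sets (the sets of tuples satisfying three candidate guards) and let c_r ≥ 0 and c_e ≥ 0 be real constants. Suppose A ∩ C = ∅ and merging A with B is not beneficial, i.e. |A ∩ B| · (c_r + c_e) ≤ c_e · |A ∪ B|. Then the transitive merge of A with the merged guard B ∪ C is also not beneficial: |A ∪ B ∪ C| · (c_r + 3·c_e) ≥ |A| · (c_r + c_e) + |B ∪ C| · (c_r + 2·c_e). -/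
/-- Corollary 1 of the paper: if `A ∩ C = ∅` and merging `A` with `B` is not
beneficial, then the transitive merge of `A` with the merged guard `B ∪ C`
(whose partition contains 3 policies) is also not beneficial. -/
theorem transitive_merge_not_beneficial
    {α : Type*} [DecidableEq α] (A B C : Finset α)
    (c_r c_e : ℝ) (hcr : 0 ≤ c_r) (hce : 0 ≤ c_e)
    (hAC : A ∩ C = ∅)
    (hAB : ((A ∩ B).card : ℝ) * (c_r + c_e) ≤ c_e * ((A ∪ B).card : ℝ)) :
    ((A ∪ B ∪ C).card : ℝ) * (c_r + 3 * c_e) ≥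
      (A.card : ℝ) * (c_r + c_e) + ((B ∪ C).card : ℝ) * (c_r + 2 * c_e) := by
  have hI : A ∩ (B ∪ C) = A ∩ B := by
    rw [Finset.inter_union_distrib_left, hAC, Finset.union_empty]
  have h1 : ((A ∪ B ∪ C).card : ℝ) + ((A ∩ B).card : ℝ) = A.card + (B ∪ C).card := by
    rw [← hI, Finset.union_assoc]
    exact_mod_cast Finset.card_union_add_card_inter A (B ∪ C)
  have h2 : ((A ∪ B).card : ℝ) + ((A ∩ B).card : ℝ) = A.card + B.card := by
    exact_mod_cast Finset.card_union_add_card_inter A B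
  have h3 : ((A ∩ B).card : ℝ) ≤ A.card := by
    exact_mod_cast Finset.card_le_card Finset.inter_subset_left
  have h4 : (B.card : ℝ) ≤ (B ∪ C).card := by
    exact_mod_cast Finset.card_le_card Finset.subset_union_left
  have e1 : ((A ∪ B ∪ C).card : ℝ) = A.card + (B ∪ C).card - (A ∩ B).card := by linarith
  have e2 : ((A ∪ B).card : ℝ) = A.card + B.card - (A ∩ B).card := by linarith
  rw [e2] at hAB
  rw [e1]
  nlinarith [mul_nonneg hce (sub_nonneg.2 h3), mul_nonneg hce (sub_nonneg.2 h4)]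
end

section
/- Let A, B, D be finite sets with B ⊆ D and A ∩ (D \ B) = ∅ (equivalently A ∩ D = A ∩ B), let m ≥ 1 be a natural number (the number of policies in the merged guard D), and let c_r ≥ 0 and c_e ≥ 0 be real constants. If merging A with B is not beneficial, i.e. |A ∩ B| · (c_r + c_e) ≤ c_e · |A ∪ B|, then merging A into the accumulated merged guard D is not beneficial either: |A ∪ D| · (c_r + (m+1)·c_e) ≥ |A| · (c_r + c_e) + |D| · (c_r + m·c_e). -/
/-- Corollary 2 of the paper: if merging `A` with `B` is not beneficial, then
merging `A` into an accumulated merged guard `D` (with `B ⊆ D`, `m ≥ 1`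
policies, and `A` intersecting `D` only inside `B`) is not beneficial. -/
theorem accumulated_merge_not_beneficial
    {α : Type*} [DecidableEq α] (A B D : Finset α)
    (hBD : B ⊆ D) (hA : A ∩ (D \ B) = ∅)
    (m : ℕ) (hm : 1 ≤ m)
    (c_r c_e : ℝ) (hcr : 0 ≤ c_r) (hce : 0 ≤ c_e)
    (hAB : ((A ∩ B).card : ℝ) * (c_r + c_e) ≤ c_e * ((A ∪ B).card : ℝ)) :
    ((A ∪ D).card : ℝ) * (c_r + ((m : ℝ) + 1) * c_e) ≥
      (A.card : ℝ) * (c_r + c_e) + (D.card : ℝ) * (c_r + (m : ℝ) * c_e) := by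
  have hint : A ∩ D = A ∩ B := by
    ext x
    have hx : x ∉ A ∩ (D \ B) := by simp [hA]
    have hb := @hBD x
    simp only [Finset.mem_inter, Finset.mem_sdiff] at hx ⊢
    tauto
  have h1 : ((A ∪ D).card : ℝ) + ((A ∩ B).card : ℝ) = A.card + D.card := by
    rw [← hint]
    exact_mod_cast Finset.card_union_add_card_inter A D
  have h2 : ((A ∪ B).card : ℝ) + ((A ∩ B).card : ℝ) = A.card + B.card := by
    exact_mod_cast Finset.card_union_add_card_inter A B
  have h3 : ((A ∩ B).card : ℝ) ≤ A.card := by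
    exact_mod_cast Finset.card_le_card Finset.inter_subset_left
  have h4 : (B.card : ℝ) ≤ D.card := by
    exact_mod_cast Finset.card_le_card hBD
  have h5 : (1 : ℝ) ≤ m := by exact_mod_cast hm
  have h6 : ((A ∪ D).card : ℝ) = A.card + D.card - (A ∩ B).card := by linarith
  have h7 : ((A ∪ B).card : ℝ) = A.card + B.card - (A ∩ B).card := by linarith
  rw [h7] at hAB
  rw [h6]
  have h8 := mul_nonneg hce (mul_nonneg (sub_nonneg.2 h5) (sub_nonneg.2 h3))
  have h9 := mul_nonneg hce (sub_nonneg.2 h4)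
  nlinarith only [hAB, h8, h9]
end
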